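/- D is a *-SH domain of type 1 (i.e., for every nonzero nonunit x of D, xD is a *-product of finitely many *-homogeneous ideals of type 1) if and only if D is a *-SH domain in which every maximal *-ideal has height 1. -/

import Mathlib

open scoped nonZeroDivisors

/-- A star operation on the nonzero fractional ideals of an integral domain `D`
with quotient field `K`: it fixes nonzero principal fractional ideals, commutes with
multiplication by nonzero principal fractional ideals, is extensive, monotone and
idempotent (on nonzero fractional ideals). -/
structure StarOperation (D K : Type*) [CommRing D] [IsDomain D] [Field K]
    [Algebra D K] [IsFractionRing D K] where
  star : FractionalIdeal D⁰ K → FractionalIdeal D⁰ K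
  star_spanSingleton : ∀ x : K, x ≠ 0 →
    star (FractionalIdeal.spanSingleton D⁰ x) = FractionalIdeal.spanSingleton D⁰ x
  star_smul : ∀ (x : K) (I : FractionalIdeal D⁰ K), x ≠ 0 → I ≠ 0 →
    star (FractionalIdeal.spanSingleton D⁰ x * I) = FractionalIdeal.spanSingleton D⁰ x * star I
  le_star : ∀ I : FractionalIdeal D⁰ K, I ≠ 0 → I ≤ star I
  star_mono : ∀ I J : FractionalIdeal D⁰ K, I ≠ 0 → J ≠ 0 → I ≤ J → star I ≤ star J
  star_idem : ∀ I : FractionalIdeal D⁰ K, I ≠ 0 → star (star I) = star I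

namespace StarOperation

variable {D K : Type*} [CommRing D] [IsDomain D] [Field K] [Algebra D K] [IsFractionRing D K]
variable (s : StarOperation D K)

/-- `*` has finite character: for every nonzero fractional ideal `I`, `I^*` is the union
of `J^*` over the nonzero finitely generated fractional subideals `J` of `I`. -/
def FiniteCharacter : Prop :=
  ∀ I : FractionalIdeal D⁰ K, I ≠ 0 → ∀ x ∈ s.star I,
    ∃ J : FractionalIdeal D⁰ K, J ≠ 0 ∧ (J : Submodule D K).FG ∧ J ≤ I ∧ x ∈ s.star J

/-- A (nonzero) integral ideal `I` of `D` is a `*`-ideal if `I^* = I`. -/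
def IsStarIdeal (I : Ideal D) : Prop :=
  I ≠ ⊥ ∧ s.star (I : FractionalIdeal D⁰ K) = (I : FractionalIdeal D⁰ K)

/-- An integral ideal `I` of `D` is a `*`-ideal of finite type if `I = J^*` for some
nonzero finitely generated ideal `J`. -/
def IsFiniteTypeStarIdeal (I : Ideal D) : Prop :=
  ∃ J : Ideal D, J ≠ ⊥ ∧ J.FG ∧
    s.star (J : FractionalIdeal D⁰ K) = (I : FractionalIdeal D⁰ K)

/-- A maximal `*`-ideal: maximal among proper integral `*`-ideals. -/
def IsMaxStarIdeal (M : Ideal D) : Prop :=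
  M ≠ ⊤ ∧ s.IsStarIdeal M ∧ ∀ J : Ideal D, J ≠ ⊤ → s.IsStarIdeal J → M ≤ J → J = M

/-- `I` is `*`-homogeneous: a proper `*`-ideal of finite type such that `(J + J')^* ≠ D`
for every pair `J`, `J'` of proper `*`-ideals of finite type containing `I`. -/
def IsHomog (I : Ideal D) : Prop :=
  I ≠ ⊤ ∧ s.IsStarIdeal I ∧ s.IsFiniteTypeStarIdeal I ∧
    ∀ J J' : Ideal D, J ≠ ⊤ → J' ≠ ⊤ → s.IsStarIdeal J → s.IsStarIdeal J' →
      s.IsFiniteTypeStarIdeal J → s.IsFiniteTypeStarIdeal J' → I ≤ J → I ≤ J' →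
      s.star ((J + J' : Ideal D) : FractionalIdeal D⁰ K) ≠ 1

/-- The set `M(I) = {x ∈ D : (xD + I)^* ≠ D}` attached to an ideal `I`. -/
def MSet (I : Ideal D) : Set D :=
  {x : D | s.star ((Ideal.span {x} + I : Ideal D) : FractionalIdeal D⁰ K) ≠ 1}

/-- `A` and `B` are `*`-comaximal if `(A + B)^* = D`. -/
def StarComaximal (A B : Ideal D) : Prop :=
  s.star ((A + B : Ideal D) : FractionalIdeal D⁰ K) = 1

/-- An integral ideal `I` is `*`-invertible if `(I · I⁻¹)^* = D`. -/
def StarInvertible (I : Ideal D) : Prop :=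
  s.star ((I : FractionalIdeal D⁰ K) * (I : FractionalIdeal D⁰ K)⁻¹) = 1

/-- `D` is a `*`-SH domain: every principal ideal generated by a nonzero nonunit is a
`*`-product of finitely many `*`-homogeneous ideals. -/
def IsSHDomain : Prop :=
  ∀ x : D, x ≠ 0 → ¬IsUnit x →
    ∃ T : Multiset (Ideal D), (∀ J ∈ T, s.IsHomog J) ∧
      s.star ((T.prod : Ideal D) : FractionalIdeal D⁰ K) =
        ((Ideal.span {x} : Ideal D) : FractionalIdeal D⁰ K)

/-- `D` has finite `*`-character: every nonzero nonunit lies in only finitely many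
maximal `*`-ideals. -/
def FiniteStarCharacter : Prop :=
  ∀ x : D, x ≠ 0 → ¬IsUnit x → {P : Ideal D | s.IsMaxStarIdeal P ∧ x ∈ P}.Finite

end StarOperation

namespace StarOperation

variable {D K : Type*} [CommRing D] [IsDomain D] [Field K] [Algebra D K] [IsFractionRing D K]

/-- A `*`-homogeneous ideal `I` is of type 1 if for every nonzero `x ∈ M(I)` there is a
positive integer `n` with `xⁿD_{M(I)} ∩ D ⊆ I`. -/
def IsHomogType1 (s : StarOperation D K) (I : Ideal D) : Prop :=
  s.IsHomog I ∧
    ∀ (M : Ideal D) [M.IsPrime], (M : Set D) = s.MSet I →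
      ∀ x ∈ M, x ≠ (0 : D) → ∃ n : ℕ, 0 < n ∧
        Ideal.comap (algebraMap D (Localization.AtPrime M))
          (Ideal.map (algebraMap D (Localization.AtPrime M)) (Ideal.span {x ^ n})) ≤ I

end StarOperation

namespace StarOperation

section helpers

variable {D K : Type*} [CommRing D] [IsDomain D] [Field K] [Algebra D K] [IsFractionRing D K]

theorem star_one' (s : StarOperation D K) : s.star 1 = 1 := by
  have := s.star_spanSingleton 1 one_ne_zero
  simpa using this

theorem exists_cl (s : StarOperation D K) (I : Ideal D) (hI : I ≠ ⊥) :
    ∃ J : Ideal D, (J : FractionalIdeal D⁰ K) = s.star (I : FractionalIdeal D⁰ K) := by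
  have h : s.star (I : FractionalIdeal D⁰ K) ≤ 1 := by
    rw [← s.star_one']
    exact s.star_mono _ _ (by simpa using hI) one_ne_zero FractionalIdeal.coeIdeal_le_one
  exact FractionalIdeal.le_one_iff_exists_coeIdeal.1 h

open Classical in
/-- The star closure as an ideal (junk value for the zero ideal). -/
noncomputable def cl (s : StarOperation D K) (I : Ideal D) : Ideal D :=
  if hI : I ≠ ⊥ then (s.exists_cl I hI).choose else ⊥

variable (s : StarOperation D K)

theorem coe_cl {I : Ideal D} (hI : I ≠ ⊥) :
    (s.cl I : FractionalIdeal D⁰ K) = s.star (I : FractionalIdeal D⁰ K) := by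
  rw [cl, dif_pos hI]
  exact (s.exists_cl I hI).choose_spec

theorem le_cl {I : Ideal D} (hI : I ≠ ⊥) : I ≤ s.cl I := by
  rw [← FractionalIdeal.coeIdeal_le_coeIdeal K, s.coe_cl hI]
  exact s.le_star _ (by simpa using hI)

theorem cl_ne {I : Ideal D} (hI : I ≠ ⊥) : s.cl I ≠ ⊥ := ne_bot_of_le_ne_bot hI (s.le_cl hI)

theorem cl_mono {I J : Ideal D} (hI : I ≠ ⊥) (h : I ≤ J) : s.cl I ≤ s.cl J := by
  have hJ := ne_bot_of_le_ne_bot hI h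
  rw [← FractionalIdeal.coeIdeal_le_coeIdeal K, s.coe_cl hI, s.coe_cl hJ]
  exact s.star_mono _ _ (by simpa using hI) (by simpa using hJ)
    ((FractionalIdeal.coeIdeal_le_coeIdeal K).2 h)

theorem cl_cl {I : Ideal D} (hI : I ≠ ⊥) : s.cl (s.cl I) = s.cl I := by
  apply FractionalIdeal.coeIdeal_injective (K := K)
  show ((s.cl (s.cl I) : Ideal D) : FractionalIdeal D⁰ K) = (s.cl I : Ideal D)
  rw [s.coe_cl (s.cl_ne hI), s.coe_cl hI]
  exact s.star_idem _ (by simpa using hI)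

theorem isStarIdeal_iff {I : Ideal D} : s.IsStarIdeal I ↔ I ≠ ⊥ ∧ s.cl I = I := by
  refine and_congr_right fun hI => ?_
  rw [← s.coe_cl hI]
  exact FractionalIdeal.coeIdeal_inj

theorem isStarIdeal_cl {I : Ideal D} (hI : I ≠ ⊥) : s.IsStarIdeal (s.cl I) :=
  s.isStarIdeal_iff.2 ⟨s.cl_ne hI, s.cl_cl hI⟩

theorem star_eq_one_iff {I : Ideal D} (hI : I ≠ ⊥) :
    s.star (I : FractionalIdeal D⁰ K) = 1 ↔ s.cl I = ⊤ := by
  rw [← s.coe_cl hI, ← FractionalIdeal.coeIdeal_top (S := D⁰) (P := K)]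
  exact FractionalIdeal.coeIdeal_inj

theorem cl_le {I J : Ideal D} (hI : I ≠ ⊥) (hJ : s.IsStarIdeal J) (h : I ≤ J) : s.cl I ≤ J := by
  rw [← (s.isStarIdeal_iff.1 hJ).2]
  exact s.cl_mono hI h

/-- The key cancellation: if `I^* = D` and `rI ⊆ J` with `J` a star ideal then `r ∈ J`. -/
theorem mem_of_cl_eq_top {I J : Ideal D} (hI : I ≠ ⊥) (hI1 : s.cl I = ⊤) (hJ : s.IsStarIdeal J)
    (r : D) (h : ∀ i ∈ I, r * i ∈ J) : r ∈ J := by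
  by_cases hr : r = 0
  · simp [hr]
  have hr' : algebraMap D K r ≠ 0 := by simpa using hr
  have hI' : (I : FractionalIdeal D⁰ K) ≠ 0 := by simpa using hI
  have e := s.star_smul (algebraMap D K r) I hr' hI'
  rw [(s.star_eq_one_iff hI).2 hI1, mul_one] at e
  have hc : FractionalIdeal.spanSingleton D⁰ (algebraMap D K r) * (I : FractionalIdeal D⁰ K)
      = ((Ideal.span {r} * I : Ideal D) : FractionalIdeal D⁰ K) := by
    rw [FractionalIdeal.coeIdeal_mul, FractionalIdeal.coeIdeal_span_singleton]
  rw [hc, ← FractionalIdeal.coeIdeal_span_singleton] at e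
  have hne : Ideal.span {r} * I ≠ ⊥ := by
    rw [Ne, Ideal.mul_eq_bot]
    simp [hr, hI]
  rw [← s.coe_cl hne] at e
  have e' := FractionalIdeal.coeIdeal_inj.1 e
  have h1 : r ∈ s.cl (Ideal.span {r} * I) := by
    rw [e']; exact Ideal.mem_span_singleton_self r
  refine s.cl_le hne hJ ?_ h1
  rw [Ideal.span_singleton_mul_le_iff]
  exact h

theorem exists_fg (hs : s.FiniteCharacter) {I : Ideal D} (hI : I ≠ ⊥) {x : D} (hx : x ∈ s.cl I) :
    ∃ J : Ideal D, J ≠ ⊥ ∧ J.FG ∧ J ≤ I ∧ x ∈ s.cl J := by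
  have hx' : algebraMap D K x ∈ s.star (I : FractionalIdeal D⁰ K) := by
    rw [← s.coe_cl hI]
    exact FractionalIdeal.mem_coeIdeal_of_mem D⁰ hx
  obtain ⟨J, hJ0, hfg, hle, hxJ⟩ := hs I (by simpa using hI) _ hx'
  obtain ⟨J', rfl⟩ := FractionalIdeal.le_one_iff_exists_coeIdeal.1
    (hle.trans FractionalIdeal.coeIdeal_le_one)
  have hJ' : J' ≠ ⊥ := by simpa using hJ0
  refine ⟨J', hJ', ?_, (FractionalIdeal.coeIdeal_le_coeIdeal K).1 hle, ?_⟩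
  · exact (FractionalIdeal.coeIdeal_fg D⁰ (IsFractionRing.injective D K) J').1 hfg
  · rw [← s.coe_cl hJ'] at hxJ
    obtain ⟨y, hy, hxy⟩ := (FractionalIdeal.mem_coeIdeal D⁰).1 hxJ
    rwa [← IsFractionRing.injective D K hxy]

theorem cl_sup_top {P : Ideal D} (hP : s.IsMaxStarIdeal P) {x : D} (hx : x ∉ P) :
    s.cl (Ideal.span {x} ⊔ P) = ⊤ := by
  obtain ⟨-, hst, hmax⟩ := hP
  have hne : Ideal.span {x} ⊔ P ≠ ⊥ := ne_bot_of_le_ne_bot hst.1 le_sup_right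
  by_contra h
  have e := hmax _ h (s.isStarIdeal_cl hne) (le_sup_right.trans (s.le_cl hne))
  apply hx
  rw [← e]
  exact s.le_cl hne (Ideal.mem_sup_left (Ideal.mem_span_singleton_self x))

theorem max_isPrime {P : Ideal D} (hP : s.IsMaxStarIdeal P) : P.IsPrime := by
  refine ⟨hP.1, fun {a b} hab => ?_⟩
  by_contra! h
  have hne : Ideal.span {a} ⊔ P ≠ ⊥ := ne_bot_of_le_ne_bot hP.2.1.1 le_sup_right
  refine h.2 (s.mem_of_cl_eq_top hne (s.cl_sup_top hP h.1) hP.2.1 b fun i hi => ?_)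
  obtain ⟨y, hy, z, hz, rfl⟩ := Submodule.mem_sup.1 hi
  obtain ⟨c, rfl⟩ := Ideal.mem_span_singleton.1 hy
  have : b * (a * c + z) = c * (a * b) + b * z := by ring
  rw [this]
  exact P.add_mem (P.mul_mem_left _ hab) (P.mul_mem_left _ hz)

theorem exists_fg_sup {P J : Ideal D} {x : D} (hJ : J.FG) (h : J ≤ Ideal.span {x} ⊔ P) :
    ∃ F : Ideal D, F.FG ∧ F ≤ P ∧ J ≤ Ideal.span {x} ⊔ F := by
  classical
  obtain ⟨S, rfl⟩ := hJ
  have h' : ∀ j : D, ∃ p ∈ P, j ∈ S → j ∈ Ideal.span {x} ⊔ Ideal.span {p} := by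
    intro j
    by_cases hj : j ∈ S
    · obtain ⟨y, hy, z, hz, rfl⟩ := Submodule.mem_sup.1 (h (Ideal.subset_span hj))
      exact ⟨z, hz, fun _ => Submodule.add_mem_sup hy (Ideal.mem_span_singleton_self z)⟩
    · exact ⟨0, P.zero_mem, fun h => absurd h hj⟩
  choose p hp hp' using h'
  refine ⟨Ideal.span (S.image p : Finset D), ⟨_, rfl⟩, ?_, ?_⟩
  · rw [Ideal.span_le]
    intro z hz
    simp only [Finset.coe_image, Set.mem_image] at hz
    obtain ⟨j, -, rfl⟩ := hz
    exact hp j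
  · refine Ideal.span_le.2 fun j hj => ?_
    have hle : Ideal.span {p j} ≤ Ideal.span ((S.image p : Finset D) : Set D) := by
      rw [Ideal.span_singleton_le_iff_mem]
      exact Ideal.subset_span (Finset.mem_coe.2 (Finset.mem_image_of_mem p hj))
    have hle2 : Ideal.span {x} ⊔ Ideal.span {p j} ≤
        Ideal.span {x} ⊔ Ideal.span ((S.image p : Finset D) : Set D) := sup_le_sup_left hle _
    exact hle2 (hp' j hj)

theorem mset_eq (hs : s.FiniteCharacter) {I P : Ideal D} (hI : s.IsHomog I)
    (hP : s.IsMaxStarIdeal P) (hIP : I ≤ P) : s.MSet I = (P : Set D) := by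
  obtain ⟨-, hst, ⟨J1, hJ1, hJ1fg, hJ1I⟩, hh⟩ := hI
  rw [← s.coe_cl hJ1, FractionalIdeal.coeIdeal_inj] at hJ1I
  subst hJ1I
  ext x
  have hxI : Ideal.span {x} + s.cl J1 ≠ ⊥ := ne_bot_of_le_ne_bot hst.1 le_sup_right
  rw [MSet, Set.mem_ofPred_eq, Ne, s.star_eq_one_iff hxI, SetLike.mem_coe]
  constructor
  · intro hx
    by_contra hxP
    have hne : Ideal.span {x} ⊔ P ≠ ⊥ := ne_bot_of_le_ne_bot hP.2.1.1 le_sup_right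
    have h1 : (1 : D) ∈ s.cl (Ideal.span {x} ⊔ P) := by
      rw [s.cl_sup_top hP hxP]; trivial
    obtain ⟨J, hJ, hJfg, hJle, h1J⟩ := s.exists_fg hs hne h1
    obtain ⟨F, hFfg, hFP, hJF⟩ := exists_fg_sup hJfg hJle
    have hA : F ⊔ J1 ≠ ⊥ := ne_bot_of_le_ne_bot hJ1 le_sup_right
    have hB : Ideal.span {x} ⊔ J1 ≠ ⊥ := ne_bot_of_le_ne_bot hJ1 le_sup_right
    have hJ1P : J1 ≤ P := (s.le_cl hJ1).trans hIP
    have hAB : s.cl (F ⊔ J1) + s.cl (Ideal.span {x} ⊔ J1) ≠ ⊥ :=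
      ne_bot_of_le_ne_bot (s.cl_ne hA) le_sup_left
    refine hh (s.cl (F ⊔ J1)) (s.cl (Ideal.span {x} ⊔ J1)) ?_ ?_ (s.isStarIdeal_cl hA)
      (s.isStarIdeal_cl hB) ⟨_, hA, Submodule.FG.sup hFfg hJ1fg, (s.coe_cl hA).symm⟩
      ⟨_, hB, Submodule.FG.sup (Submodule.fg_span_singleton x) hJ1fg, (s.coe_cl hB).symm⟩
      (s.cl_mono hJ1 le_sup_right) (s.cl_mono hJ1 le_sup_right) ?_
    · intro e
      exact hP.1 (top_le_iff.1 (e ▸ s.cl_le hA hP.2.1 (sup_le hFP hJ1P)))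
    · intro e
      exact hx (top_le_iff.1 (e ▸ s.cl_mono hB (sup_le_sup_left (s.le_cl hJ1) _)))
    · rw [s.star_eq_one_iff hAB, Ideal.eq_top_iff_one]
      refine s.cl_mono hJ (hJF.trans (sup_le ?_ ?_)) h1J
      · exact (le_sup_left.trans (s.le_cl hB)).trans le_sup_right
      · exact (le_sup_left.trans (s.le_cl hA)).trans le_sup_left
  · intro hx e
    refine hP.1 (top_le_iff.1 (e ▸ s.cl_le hxI hP.2.1 (sup_le ?_ hIP)))
    rwa [Ideal.span_singleton_le_iff_mem]

theorem exists_max (hs : s.FiniteCharacter) {I : Ideal D} (hI : s.IsStarIdeal I) (hI1 : I ≠ ⊤) :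
    ∃ P : Ideal D, s.IsMaxStarIdeal P ∧ I ≤ P := by
  obtain ⟨P, hIP, hP⟩ := zorn_le_nonempty₀ {J : Ideal D | J ≠ ⊤ ∧ s.IsStarIdeal J} (by
    intro c hc hchain y hy
    have hyb : y ≠ ⊥ := (hc hy).2.1
    have hU : sSup c ≠ ⊥ := ne_bot_of_le_ne_bot hyb (le_sSup hy)
    refine ⟨sSup c, ⟨?_, ?_⟩, fun z hz => le_sSup hz⟩
    · rw [Ne, Ideal.eq_top_iff_one]
      intro h
      obtain ⟨z, hz, h1⟩ := (Submodule.mem_sSup_of_directed ⟨y, hy⟩ hchain.directedOn).1 h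
      exact (hc hz).1 ((Ideal.eq_top_iff_one z).2 h1)
    · refine s.isStarIdeal_iff.2 ⟨hU, le_antisymm (fun x hx => ?_) (s.le_cl hU)⟩
      obtain ⟨J, hJ, hJfg, hJle, hxJ⟩ := s.exists_fg hs hU hx
      have hcomp := (Submodule.fg_iff_compact J).1 hJfg
      obtain ⟨z, hz, hJz⟩ := (CompleteLattice.isCompactElement_iff_le_of_directed_sSup_le
        (Ideal D) J).1 hcomp c ⟨y, hy⟩ hchain.directedOn hJle
      exact le_sSup hz (s.cl_le hJ (hc hz).2 hJz hxJ)) I ⟨hI1, hI⟩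
  refine ⟨P, ⟨hP.prop.1, hP.prop.2, fun J hJ1 hJ hPJ => ?_⟩, hIP⟩
  exact (hP.eq_of_le ⟨hJ1, hJ⟩ hPJ).symm

end helpers

end StarOperation

/-- `D` is a `*`-SH domain of type 1 iff `D` is a `*`-SH domain in which
every maximal `*`-ideal has height 1. -/
theorem isSHDomainType1_iff {D K : Type*} [CommRing D] [IsDomain D] [Field K]
    [Algebra D K] [IsFractionRing D K] (s : StarOperation D K) (hs : s.FiniteCharacter) :
    (∀ x : D, x ≠ 0 → ¬IsUnit x →
      ∃ T : Multiset (Ideal D), (∀ J ∈ T, s.IsHomogType1 J) ∧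
        s.star ((T.prod : Ideal D) : FractionalIdeal D⁰ K) =
          ((Ideal.span {x} : Ideal D) : FractionalIdeal D⁰ K)) ↔
    (s.IsSHDomain ∧ ∀ P : Ideal D, s.IsMaxStarIdeal P →
      P ≠ ⊥ ∧ ∀ Q : Ideal D, Q.IsPrime → Q < P → Q = ⊥) := by
  constructor
  · intro h
    refine ⟨fun x hx hxu => ?_, fun P hP => ⟨hP.2.1.1, fun Q hQ hQP => ?_⟩⟩
    · obtain ⟨T, hT, e⟩ := h x hx hxu
      exact ⟨T, fun J hJ => (hT J hJ).1, e⟩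
    · by_contra hQ0
      obtain ⟨x, hxQ, hx0⟩ := Submodule.exists_mem_ne_zero_of_ne_bot hQ0
      have hxu : ¬ IsUnit x := fun hu => hQ.ne_top (Ideal.eq_top_of_isUnit_mem _ hxQ hu)
      obtain ⟨T, hT, e⟩ := h x hx0 hxu
      have hT0 : T.prod ≠ ⊥ := by
        intro h0
        have h0' := Multiset.prod_eq_zero_iff.1 (h0.trans Ideal.zero_eq_bot.symm)
        exact (hT _ h0').1.2.1.1 rfl
      rw [← s.coe_cl hT0, FractionalIdeal.coeIdeal_inj] at e
      have hle : T.prod ≤ Q :=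
        ((s.le_cl hT0).trans e.le).trans ((Ideal.span_singleton_le_iff_mem Q).2 hxQ)
      obtain ⟨I, hIT, hIQ⟩ := (Ideal.IsPrime.multiset_prod_le hQ).1 hle
      obtain ⟨y, hyP, hyQ⟩ := SetLike.exists_of_lt hQP
      have hPp := s.max_isPrime hP
      obtain ⟨n, hn, hle'⟩ := (hT I hIT).2 P
        (s.mset_eq hs (hT I hIT).1 hP (hIQ.trans hQP.le)).symm y hyP
        (fun h0 => hyQ (h0 ▸ Q.zero_mem))
      refine hyQ (hQ.mem_of_pow_mem n (hIQ (hle' ?_)))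
      exact Ideal.le_comap_map (Ideal.mem_span_singleton_self _)
  · rintro ⟨hSH, hht⟩ x hx hxu
    obtain ⟨T, hT, e⟩ := hSH x hx hxu
    refine ⟨T, fun I hI => ⟨hT I hI, ?_⟩, e⟩
    intro M hMp hM y hyM hy0
    have hIh := hT I hI
    obtain ⟨P, hP, hIP⟩ := s.exists_max hs hIh.2.1 hIh.1
    have hMP : M = P := SetLike.coe_injective (hM.trans (s.mset_eq hs hIh hP hIP))
    subst hMP
    -- cancellation of elements outside `M`
    have hcancel : ∀ t ∉ M, ∀ r, t * r ∈ I → r ∈ I := by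
      intro t ht r htr
      have hne : Ideal.span {t} + I ≠ ⊥ := ne_bot_of_le_ne_bot hIh.2.1.1 le_sup_right
      have h1 : s.cl (Ideal.span {t} + I) = ⊤ := by
        by_contra h1
        have : t ∈ s.MSet I := fun h2 => h1 ((s.star_eq_one_iff hne).1 h2)
        rw [← hM] at this
        exact ht this
      refine s.mem_of_cl_eq_top hne h1 hIh.2.1 r fun i hi => ?_
      obtain ⟨a, ha, z, hz, rfl⟩ := Submodule.mem_sup.1 hi
      obtain ⟨c, rfl⟩ := Ideal.mem_span_singleton.1 ha
      have : r * (t * c + z) = c * (t * r) + r * z := by ring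
      rw [this]
      exact I.add_mem (I.mul_mem_left _ htr) (I.mul_mem_left _ hz)
    have hpow : ∃ n : ℕ, ∃ t ∉ M, t * y ^ n ∈ I := by
      by_contra! hcon
      have hdis : Disjoint (I : Set D) ((M.primeCompl ⊔ Submonoid.powers y : Submonoid D) : Set D) := by
        rw [Set.disjoint_left]
        intro z hzI hz
        obtain ⟨t, ht, w, ⟨n, rfl⟩, rfl⟩ := Submonoid.mem_sup.1 hz
        exact hcon n t ht hzI
      obtain ⟨Q, hQ, hIQ, hQd⟩ := Ideal.exists_le_prime_disjoint I _ hdis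
      rw [Set.disjoint_left] at hQd
      have hQM : Q ≤ M := by
        intro z hz
        by_contra hzM
        exact hQd hz (Submonoid.mem_sup_left (S := M.primeCompl) hzM)
      have hyQ : y ∉ Q := fun hyQ => hQd hyQ
        (Submonoid.mem_sup_right (Submonoid.mem_powers y))
      have hlt : Q < M := lt_of_le_of_ne hQM fun e => hyQ (e ▸ hyM)
      have := (hht M hP).2 Q hQ hlt
      exact hIh.2.1.1 (le_bot_iff.1 (this ▸ hIQ))
    obtain ⟨n, t, ht, htn⟩ := hpow
    refine ⟨n + 1, n.succ_pos, fun z hz => ?_⟩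
    obtain ⟨u, hu, huz⟩ := (IsLocalization.algebraMap_mem_map_algebraMap_iff M.primeCompl
      (Localization.AtPrime M) _ z).1 hz
    obtain ⟨c, hc⟩ := Ideal.mem_span_singleton.1 huz
    refine hcancel u hu z (hcancel t ht _ ?_)
    rw [hc]
    have : t * (y ^ (n + 1) * c) = (y * c) * (t * y ^ n) := by ring
    rw [this]
    exact I.mul_mem_left _ htn
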